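/- Let σ_1 ∈ Gal(K_2/K_0) be as in Proposition 3.4 (so (σ_1−1)x_1 = 1 + ε with v_2(ε) > 0) and set σ_2 = σ_1^p. Then (σ_2 − 1)x_1 = 0 and (σ_2 − 1)x_2 = 1 + δ for some δ ∈ K_2 with v_2(δ) ≥ p^2·e_0 − p(p−1)·u_2, where u_2 = −v_0(a_2) is the second upper ramification number of K_2/K_0. -/

import Mathlib

/-- A normalized discrete valuation on a field `K`, recorded as a function
`v : K → ℤ`.  The value of `v` at `0` is irrelevant: all conditions below only
refer to nonzero elements (the convention `v 0 = ∞` being understood). -/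
structure IsDiscVal {K : Type*} [Field K] (v : K → ℤ) : Prop where
  map_one : v 1 = 0
  map_mul : ∀ x y : K, x ≠ 0 → y ≠ 0 → v (x * y) = v x + v y
  min_le_add : ∀ x y : K, x ≠ 0 → y ≠ 0 → x + y ≠ 0 → min (v x) (v y) ≤ v (x + y)
  exists_uniformizer : ∃ π : K, π ≠ 0 ∧ v π = 1

/-- `v x ≥ k`, with the convention `v 0 = ∞`. -/
def ValGE {K : Type*} [Field K] (v : K → ℤ) (k : ℤ) (x : K) : Prop :=
  x = 0 ∨ k ≤ v x

namespace ValGE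

variable {K : Type*} [Field K] {v : K → ℤ} {k l : ℤ} {x y : K}

theorem mono (hx : ValGE v k x) (h : l ≤ k) : ValGE v l x :=
  hx.imp_right h.trans

theorem of_ne_zero (hx : ValGE v k x) (h : x ≠ 0) : k ≤ v x :=
  hx.resolve_left h

theorem add (hv : IsDiscVal v) (hx : ValGE v k x) (hy : ValGE v k y) : ValGE v k (x + y) := by
  by_cases hx0 : x = 0
  · simpa [hx0] using hy
  by_cases hy0 : y = 0
  · simpa [hy0] using hx
  by_cases h : x + y = 0
  · exact Or.inl h
  · exact Or.inr ((le_min (hx.of_ne_zero hx0) (hy.of_ne_zero hy0)).trans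
      (hv.min_le_add x y hx0 hy0 h))

theorem mul (hv : IsDiscVal v) (hx : ValGE v k x) (hy : ValGE v l y) :
    ValGE v (k + l) (x * y) := by
  by_cases hx0 : x = 0
  · exact Or.inl (by simp [hx0])
  by_cases hy0 : y = 0
  · exact Or.inl (by simp [hy0])
  · exact Or.inr (by
      rw [hv.map_mul x y hx0 hy0]
      exact add_le_add (hx.of_ne_zero hx0) (hy.of_ne_zero hy0))

theorem one (hv : IsDiscVal v) : ValGE v 0 1 :=
  Or.inr hv.map_one.ge

theorem pow (hv : IsDiscVal v) (hx : ValGE v k x) (n : ℕ) : ValGE v (n * k) (x ^ n) := by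
  induction n with
  | zero => simpa using one hv
  | succ n ih =>
    rw [pow_succ]
    exact (ih.mul hv hx).mono (by push_cast; linarith)

theorem neg (hv : IsDiscVal v) (hx : ValGE v k x) : ValGE v k (-x) := by
  have h : 2 * v (-1) = 0 := by
    have := hv.map_mul (-1) (-1) (by simp) (by simp)
    rw [neg_mul_neg, one_mul, hv.map_one] at this
    linarith
  have h1 : ValGE v 0 (-1 : K) := Or.inr (by linarith)
  simpa using h1.mul hv hx

theorem sub (hv : IsDiscVal v) (hx : ValGE v k x) (hy : ValGE v k y) : ValGE v k (x - y) := by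
  rw [sub_eq_add_neg]
  exact hx.add hv (hy.neg hv)

theorem natCast (hv : IsDiscVal v) (n : ℕ) : ValGE v 0 (n : K) := by
  induction n with
  | zero => exact Or.inl (by simp)
  | succ n ih =>
    rw [Nat.cast_succ]
    exact ih.add hv (one hv)

theorem sum (hv : IsDiscVal v) {ι : Type*} (s : Finset ι) (f : ι → K)
    (h : ∀ i ∈ s, ValGE v k (f i)) : ValGE v k (∑ i ∈ s, f i) :=
  Finset.sum_induction f (ValGE v k) (fun _ _ hx hy => hx.add hv hy) (Or.inl rfl) h

end ValGE

namespace IsDiscVal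

variable {K : Type*} [Field K] {v : K → ℤ}

theorem map_pow (hv : IsDiscVal v) {x : K} (hx : x ≠ 0) (n : ℕ) : v (x ^ n) = n * v x := by
  induction n with
  | zero => simpa using hv.map_one
  | succ n ih =>
    rw [pow_succ, hv.map_mul _ _ (pow_ne_zero n hx) hx, ih]
    push_cast
    ring

/-- An ultrametric sum of elements with pairwise distinct valuations is no smaller than
its terms. -/
theorem valGE_of_sum (hv : IsDiscVal v) {ι : Type*} [Fintype ι] (f : ι → K)
    (hf : ∀ i j, f i ≠ 0 → f j ≠ 0 → v (f i) = v (f j) → i = j) {k : ℤ}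
    (hk : ValGE v k (∑ i, f i)) (i : ι) : ValGE v k (f i) := by
  classical
  by_contra hi
  simp only [ValGE, not_or, not_le] at hi
  obtain ⟨j, hj, hmin⟩ := Finset.exists_min_image (Finset.univ.filter fun i => f i ≠ 0)
    (fun i => v (f i)) ⟨i, by simpa using hi.1⟩
  have hj0 : f j ≠ 0 := by simpa using hj
  have hjk : v (f j) < k := (hmin i (by simpa using hi.1)).trans_lt hi.2
  have hrest : ValGE v (v (f j) + 1) (∑ l ∈ Finset.univ.erase j, f l) := by
    refine ValGE.sum hv _ _ fun l hl => ?_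
    by_cases hl0 : f l = 0
    · exact Or.inl hl0
    refine Or.inr ((hmin l (by simpa using hl0)).lt_of_ne fun h => ?_)
    exact (Finset.ne_of_mem_erase hl) (hf l j hl0 hj0 h.symm)
  have hfj : f j = (∑ i, f i) - ∑ l ∈ Finset.univ.erase j, f l := by
    rw [← Finset.add_sum_erase _ _ (Finset.mem_univ j)]
    ring
  have := ((hk.mono hjk).sub hv hrest).of_ne_zero (hfj ▸ hj0)
  rw [← hfj] at this
  linarith

/-- In a totally ramified extension, automorphisms preserve the maximal ideal. -/
theorem valGE_one_map {K₀ : Type*} [Field K₀] [Algebra K₀ K] [FiniteDimensional K₀ K]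
    {v₀ : K₀ → ℤ} (hv : IsDiscVal v)
    (hram : ∀ x : K₀, x ≠ 0 → v (algebraMap K₀ K x) = Module.finrank K₀ K * v₀ x)
    (σ : K ≃ₐ[K₀] K) {z : K} (hz : ValGE v 1 z) : ValGE v 1 (σ z) := by
  obtain ⟨π, hπ0, hπ⟩ := hv.exists_uniformizer
  set n := Module.finrank K₀ K with hn
  have hnpos : 0 < n := Module.finrank_pos
  have hterm : ∀ (y : K), y ≠ 0 → ∀ (c : K₀), c ≠ 0 → ∀ i : ℕ,
      v (c • y ^ i) = n * v₀ c + i * v y := by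
    intro y hy c hc i
    rw [Algebra.smul_def, hv.map_mul _ _ (by simpa using hc) (pow_ne_zero _ hy), hram c hc,
      hv.map_pow hy]
  have hcoeff : ∀ (c : Fin n → K₀) (k : ℤ), ValGE v k (∑ i, c i • π ^ (i : ℕ)) →
      ∀ i, c i ≠ 0 → k ≤ n * v₀ (c i) + i := by
    intro c k hk i hi
    have := (hv.valGE_of_sum _ ?_ hk i).of_ne_zero (smul_ne_zero hi (pow_ne_zero _ hπ0))
    · simpa [hterm π hπ0 _ hi, hπ] using this
    intro i j hi hj hij
    rw [hterm π hπ0 _ (left_ne_zero_of_smul hi), hterm π hπ0 _ (left_ne_zero_of_smul hj), hπ,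
      mul_one, mul_one] at hij
    have hmod := congrArg (· % (n : ℤ)) hij
    simp only [Int.mul_add_emod_self_left] at hmod
    rw [Int.emod_eq_of_lt (by positivity) (by exact_mod_cast i.2),
      Int.emod_eq_of_lt (by positivity) (by exact_mod_cast j.2)] at hmod
    exact Fin.ext (by exact_mod_cast hmod)
  have hli : LinearIndependent K₀ fun i : Fin n => π ^ (i : ℕ) := by
    rw [Fintype.linearIndependent_iff]
    intro c hc i
    by_contra hi
    have := hcoeff c (n * v₀ (c i) + i + 1) (Or.inl hc) i hi
    linarith
  have hexp : ∀ y : K, ∃ c : Fin n → K₀, ∑ i, c i • π ^ (i : ℕ) = y := by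
    intro y
    rw [← Submodule.mem_span_range_iff_exists_fun,
      hli.span_eq_top_of_card_eq_finrank' (by simp [hn])]
    trivial
  have hσπ0 : σ π ≠ 0 := by simpa using hπ0
  have hσπ : 1 ≤ v (σ π) := by
    by_contra! hlt
    obtain ⟨c, hc⟩ := hexp (π ^ n)
    have hcv := hcoeff c n (Or.inr (by rw [hc, hv.map_pow hπ0, hπ, mul_one]))
    have hσc := congrArg σ hc
    simp only [map_sum, map_smul, _root_.map_pow] at hσc
    have hge : ValGE v (n * v (σ π) + 1) (σ π ^ n) := by
      rw [← hσc]
      refine ValGE.sum hv _ _ fun i _ => ?_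
      by_cases hi : c i = 0
      · exact Or.inl (by simp [hi])
      refine Or.inr ?_
      rw [hterm _ hσπ0 _ hi]
      have hin : (i : ℤ) < n := by exact_mod_cast i.2
      have hpos : 0 < v₀ (c i) := by
        have := hcv i hi
        by_contra! h
        nlinarith
      nlinarith
    have := hge.of_ne_zero (pow_ne_zero _ hσπ0)
    rw [hv.map_pow hσπ0] at this
    linarith
  obtain ⟨c, rfl⟩ := hexp z
  simp only [map_sum, map_smul, _root_.map_pow]
  refine ValGE.sum hv _ _ fun i _ => ?_
  by_cases hi : c i = 0
  · exact Or.inl (by simp [hi])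
  refine Or.inr ?_
  rw [hterm _ hσπ0 _ hi]
  have hin : (i : ℤ) < n := by exact_mod_cast i.2
  have := hcoeff c 1 hz i hi
  nlinarith [mul_le_mul_of_nonneg_left hσπ (Int.natCast_nonneg (i : ℕ))]

/-- A root `y` of `y ^ p - y = c` has valuation at least `v c / p` when the latter is
nonpositive. -/
theorem valGE_of_pow_sub_self (hv : IsDiscVal v) {p : ℕ} (hp : 1 < p) {y c : K} {k : ℤ}
    (hk : k ≤ 0) (hc : ValGE v (p * k) c) (hy : y ^ p - y = c) : ValGE v k y := by
  by_contra h
  simp only [ValGE, not_or, not_le] at h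
  obtain ⟨hy0, hlt⟩ := h
  have hp' : (1 : ℤ) < p := by exact_mod_cast hp
  have h1 : ValGE v (p * v y + 1) (c + y) :=
    (hc.mono (by nlinarith)).add hv (Or.inr (by nlinarith))
  rw [← hy, sub_add_cancel] at h1
  have := h1.of_ne_zero (pow_ne_zero _ hy0)
  rw [hv.map_pow hy0] at this
  linarith

end IsDiscVal

/-- The mixed terms of `(x + y) ^ p`, divided by `p`. -/
def mixedTerms {K : Type*} [Field K] (p : ℕ) (x y : K) : K :=
  ∑ k ∈ Finset.Ioo 0 p, x ^ k * y ^ (p - k) * ((p.choose k / p : ℕ) : K)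

theorem add_pow_eq_mixedTerms {K : Type*} [Field K] {p : ℕ} (hp : p.Prime) (x y : K) :
    (x + y) ^ p = x ^ p + y ^ p + p * mixedTerms p x y := by
  rw [add_pow_prime_eq hp, mixedTerms, mul_assoc, mul_assoc, ← mul_assoc x, Finset.mul_sum]
  congr 2
  refine Finset.sum_congr rfl fun k hk => ?_
  rw [Finset.mem_Ioo] at hk
  have hx : x ^ k = x * x ^ (k - 1) := by rw [← pow_succ', Nat.sub_add_cancel hk.1]
  have hy : y ^ (p - k) = y * y ^ (p - k - 1) := by
    rw [← pow_succ', Nat.sub_add_cancel (Nat.sub_pos_of_lt hk.2)]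
  rw [hx, hy]
  ring

theorem IsDiscVal.valGE_mixedTerms {K : Type*} [Field K] {v : K → ℤ} (hv : IsDiscVal v) {p : ℕ}
    {x y : K} {a b t : ℤ} (hx : ValGE v a x) (hy : ValGE v b y)
    (ht : ∀ k : ℤ, 1 ≤ k → k + 1 ≤ p → t ≤ k * a + (p - k) * b) :
    ValGE v t (mixedTerms p x y) := by
  refine ValGE.sum hv _ _ fun k hk => ?_
  rw [Finset.mem_Ioo] at hk
  refine (((hx.pow hv k).mul hv (hy.pow hv (p - k))).mul hv (ValGE.natCast hv _)).mono ?_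
  rw [Nat.cast_sub hk.2.le, add_zero]
  exact ht k (by exact_mod_cast hk.1) (by exact_mod_cast hk.2)

/-- If `1 + δ` is a root of `X ^ p - X + w` with `δ` in the maximal ideal, then `δ` is at least
as small as `w`. -/
theorem IsDiscVal.valGE_of_eq_pow_add {K : Type*} [Field K] {v : K → ℤ} (hv : IsDiscVal v) {p : ℕ}
    (hp : p.Prime) (hpv : ValGE v 1 (p : K)) {δ w : K} {t : ℤ} (hδ : ValGE v 1 δ)
    (hw : ValGE v t w) (hroot : δ = δ ^ p + p * mixedTerms p 1 δ + w) : ValGE v t δ := by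
  by_contra hcon
  simp only [ValGE, not_or, not_le] at hcon
  obtain ⟨hδ0, hlt⟩ := hcon
  have hp2 : (2 : ℤ) ≤ p := by exact_mod_cast hp.two_le
  have hδ1 : 1 ≤ v δ := hδ.of_ne_zero hδ0
  have hδself : ValGE v (v δ) δ := Or.inr le_rfl
  have hmixed : ValGE v (v δ) (mixedTerms p 1 δ) :=
    hv.valGE_mixedTerms (ValGE.one hv) hδself fun k hk1 hk2 => by nlinarith
  have hge : ValGE v (v δ + 1) (δ ^ p + p * mixedTerms p 1 δ + w) :=
    (((hδself.pow hv p).mono (by nlinarith)).add hv ((hpv.mul hv hmixed).mono (by linarith))).add hv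
      (hw.mono hlt)
  rw [← hroot] at hge
  linarith [hge.of_ne_zero hδ0]

/-- In a cyclic extension of degree `p ^ 2`, a root of `X ^ p - X - a` is fixed by `p`-th powers
of automorphisms. -/
theorem pow_apply_eq_self_of_pow_sub_self {K₀ K : Type*} [Field K₀] [Field K] [Algebra K₀ K]
    [FiniteDimensional K₀ K] [IsGalois K₀ K] {p : ℕ} (hp : p.Prime)
    (hdeg : Module.finrank K₀ K = p ^ 2) (hcyc : IsCyclic (K ≃ₐ[K₀] K))
    {a : K₀} {x : K} (hx : x ^ p - x = algebraMap K₀ K a) (σ : K ≃ₐ[K₀] K) :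
    (σ ^ p) x = x := by
  classical
  let H := MulAction.stabilizer (K ≃ₐ[K₀] K) x
  have hcard : Nat.card (K ≃ₐ[K₀] K) = p ^ 2 := by rw [IsGalois.card_aut_eq_finrank, hdeg]
  have hdvd : H.index ∣ p ^ 2 := hcard ▸ H.index_dvd_card
  let f : Polynomial K := Polynomial.X ^ p - (Polynomial.X + Polynomial.C (algebraMap K₀ K a))
  have hdegf : (Polynomial.X + Polynomial.C (algebraMap K₀ K a)).degree < (p : WithBot ℕ) := by
    rw [Polynomial.degree_X_add_C]
    exact_mod_cast hp.one_lt
  have hfmonic : f.Monic := Polynomial.monic_X_pow_sub hdegf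
  have hfdeg : f.natDegree = p := by
    apply Polynomial.natDegree_eq_of_degree_eq_some
    rw [Polynomial.degree_sub_eq_left_of_degree_lt] <;> simp only [Polynomial.degree_X_pow]
    exact hdegf
  have hle : H.index ≤ p := by
    rw [MulAction.index_stabilizer]
    calc (MulAction.orbit (K ≃ₐ[K₀] K) x).ncard ≤ (f.roots.toFinset : Set K).ncard := by
          refine Set.ncard_le_ncard ?_ (Finset.finite_toSet _)
          rintro _ ⟨τ, rfl⟩
          have hτ := congrArg τ hx
          rw [map_sub, map_pow, AlgEquiv.commutes] at hτ
          simp only [Finset.mem_coe, Multiset.mem_toFinset, Polynomial.mem_roots hfmonic.ne_zero,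
            Polynomial.IsRoot, f, Polynomial.eval_sub, Polynomial.eval_add, Polynomial.eval_pow,
            Polynomial.eval_X, Polynomial.eval_C]
          rw [← hτ]
          simp [AlgEquiv.smul_def]
      _ ≤ p := by
          rw [Set.ncard_coe_finset, ← hfdeg]
          exact (Multiset.toFinset_card_le _).trans (Polynomial.card_roots' f)
  have hdvdp : H.index ∣ p := by
    obtain ⟨i, hi, h⟩ := (Nat.dvd_prime_pow hp).1 hdvd
    rw [h] at hle ⊢
    have : i ≤ 1 := (Nat.pow_le_pow_iff_right hp.one_lt).1 (by simpa using hle)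
    simpa using pow_dvd_pow p this
  let := IsCyclic.commGroup (α := K ≃ₐ[K₀] K)
  have hmem : σ ^ H.index ∈ H := H.pow_index_mem σ
  obtain ⟨r, hr⟩ := hdvdp
  have : σ ^ p ∈ H := by
    rw [hr, pow_mul]
    exact H.pow_mem hmem r
  exact this

/-- with `σ₁` as in Proposition 3.4 and `σ₂ = σ₁^p`, one has
`(σ₂−1)x₁ = 0` and `(σ₂−1)x₂ = 1 + δ` with `v₂(δ) ≥ p²e₀ − p(p−1)u₂`,
where `u₂ = −v₀(a₂)`. -/
theorem statement7
    (p : ℕ) (hp : p.Prime)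
    (K0 K2 : Type*) [Field K0] [Field K2] [CharZero K0] [CharZero K2]
    [Algebra K0 K2] [IsGalois K0 K2] [FiniteDimensional K0 K2]
    (hdeg : Module.finrank K0 K2 = p ^ 2)
    (hcyc : IsCyclic (K2 ≃ₐ[K0] K2))
    (v0 : K0 → ℤ) (v2 : K2 → ℤ)
    (hv0 : IsDiscVal v0) (hv2 : IsDiscVal v2)
    (e0 : ℤ) (he0 : e0 = v0 (p : K0)) (he0pos : 1 ≤ e0)
    (hram : ∀ x : K0, x ≠ 0 → v2 (algebraMap K0 K2 x) = (p : ℤ) ^ 2 * v0 x)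
    (a1 μ a2 : K0) (ha1 : a1 ≠ 0) (hμ0 : μ ≠ 0)
    (hwitt : ∀ y : K0, y ^ p - y ≠ a1)
    (hnd : ¬ ((p : ℤ) ∣ v0 a1))
    (hneg : v0 a1 < 0)
    (hbd : -((p : ℤ) * e0) < ((p : ℤ) ^ 2 - 1) * v0 a1)
    (m : ℤ) (hm : m = -v0 μ) (hmpos : 0 < m)
    (hmu1 : (p : ℤ) ^ 2 * (p - 1) * m - (2 * p * (p - 1) + 1) * v0 a1 < (p : ℤ) ^ 2 * e0)
    (hmu2 : -(((p : ℤ) ^ 2 - 1) * v0 a1) < (p : ℤ) ^ 2 * m)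
    (ha2 : a2 = μ ^ p * a1)
    (x1 x2 : K2)
    (hx1 : x1 ^ p - x1 = algebraMap K0 K2 a1)
    (hx2 : x2 ^ p - x2 = algebraMap K0 K2 a2 +
      (x1 ^ p + (algebraMap K0 K2 a1) ^ p - (x1 + algebraMap K0 K2 a1) ^ p) / (p : K2))
    (hgen : Algebra.adjoin K0 {x1, x2} = ⊤)
    (b1 b2 : ℤ) (hb1 : b1 = -v0 a1) (hb2 : b2 = (p : ℤ) ^ 2 * m + b1)
    (σ1 : K2 ≃ₐ[K0] K2) (ε δ' : K2)
    (hσ1x1 : σ1 x1 = x1 + 1 + ε)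
    (hε : ε ≠ 0) (hεv : v2 ε = (p : ℤ) ^ 2 * e0 - p * (p - 1) * b1)
    (hσ1x2 : σ1 x2 = x2 + (x1 ^ p + 1 - (x1 + 1) ^ p) / (p : K2) + δ')
    (hδ' : δ' = 0 ∨ 0 < v2 δ') :
    (σ1 ^ p) x1 = x1 ∧
    ∃ δ : K2, (σ1 ^ p) x2 = x2 + 1 + δ ∧
      (δ = 0 ∨ (p : ℤ) ^ 2 * e0 - p * (p - 1) * (-v0 a2) ≤ v2 δ) := by
  have hp1 : (2 : ℤ) ≤ p := by exact_mod_cast hp.two_le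
  have hpK : (p : K2) ≠ 0 := by exact_mod_cast hp.ne_zero
  have hram' : ∀ x : K0, x ≠ 0 →
      v2 (algebraMap K0 K2 x) = Module.finrank K0 K2 * v0 x := by
    intro x hx
    rw [hram x hx, hdeg]
    push_cast
    rfl
  have hvp : v2 (p : K2) = (p : ℤ) ^ 2 * e0 := by
    rw [he0, ← hram _ (by exact_mod_cast hp.ne_zero), map_natCast]
  have hva2 : v0 a2 = -(p * m + b1) := by
    rw [ha2, hv0.map_mul _ _ (pow_ne_zero _ hμ0) ha1, hv0.map_pow hμ0, hb1, hm]
    ring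
  have hva1 : v0 a1 = -b1 := by rw [hb1, neg_neg]
  rw [hva1] at hneg hbd hmu1 hmu2
  have hb1pos : 0 < b1 := by linarith
  have hfix := pow_apply_eq_self_of_pow_sub_self hp hdeg hcyc hx1 σ1
  refine ⟨hfix, ?_⟩
  have ha1v : ValGE v2 (p * -(p * b1)) (algebraMap K0 K2 a1) :=
    Or.inr (by rw [hram _ ha1, hva1]; linarith)
  have hx1v : ValGE v2 (-(p * b1)) x1 :=
    hv2.valGE_of_pow_sub_self hp.one_lt (by nlinarith) ha1v hx1
  have ha2v : ValGE v2 (p * -(p * (p * m + b1))) (algebraMap K0 K2 a2) :=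
    Or.inr (by
      rw [hram _ (by rw [ha2]; exact mul_ne_zero (pow_ne_zero _ hμ0) ha1), hva2]
      linarith)
  have hx2v : ValGE v2 (-(p * (p * m + b1))) x2 := by
    refine hv2.valGE_of_pow_sub_self hp.one_lt (by nlinarith [mul_pos hb1pos hmpos]) ?_ hx2
    refine ha2v.add hv2 ?_
    have hD : (x1 ^ p + algebraMap K0 K2 a1 ^ p - (x1 + algebraMap K0 K2 a1) ^ p) / (p : K2) =
        -mixedTerms p x1 (algebraMap K0 K2 a1) := by
      rw [add_pow_eq_mixedTerms hp]
      field_simp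
      ring
    rw [hD]
    refine (hv2.valGE_mixedTerms hx1v ha1v fun k hk1 hk2 => ?_).neg hv2
    have h1 := mul_le_mul_of_nonneg_left hmu2.le (by linarith : (0 : ℤ) ≤ p)
    have h2 : 0 ≤ (k + 1) * (p * (p - 1) * b1) :=
      mul_nonneg (by linarith) (mul_nonneg (mul_nonneg (by linarith) (by linarith)) hb1pos.le)
    linarith
  -- up to a small remainder, the part of `σ₁ x₂ - x₂` coming from `D(x₁, 1)` telescopes
  obtain ⟨γ, hγ⟩ : ∃ γ, γ = (σ1 x1 ^ p - (x1 + 1) ^ p) / (p : K2) := ⟨_, rfl⟩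
  have hγv : ValGE v2 1 γ := by
    have h1 : ValGE v2 (-(p * b1)) (x1 + 1) :=
      hx1v.add hv2 ((ValGE.one hv2).mono (by nlinarith))
    have h2 : γ = ε ^ p / p + mixedTerms p (x1 + 1) ε := by
      rw [hγ, hσ1x1, add_pow_eq_mixedTerms hp]
      field_simp
      ring
    rw [h2]
    refine ValGE.add hv2 (Or.inr ?_)
      (hv2.valGE_mixedTerms h1 (Or.inr hεv.ge) fun k hk1 hk2 => ?_)
    · have h3 := hv2.map_mul (ε ^ p / p) p (div_ne_zero (pow_ne_zero _ hε) hpK) hpK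
      rw [div_mul_cancel₀ _ hpK, hv2.map_pow hε, hεv, hvp] at h3
      have heb : b1 + 1 ≤ e0 := by
        by_contra! h
        nlinarith [mul_nonneg (by linarith : (0 : ℤ) ≤ p) (by linarith : 0 ≤ b1 - e0),
          mul_nonneg (mul_nonneg (by linarith : (0 : ℤ) ≤ p) (by linarith : (0 : ℤ) ≤ p - 2))
            hb1pos.le, mul_nonneg (by linarith : (0 : ℤ) ≤ p - 2) hb1pos.le]
      have h4 : 0 < (p : ℤ) ^ 2 * (p - 1) * (e0 - b1) :=
        mul_pos (mul_pos (by positivity) (by linarith)) (by linarith)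
      linarith
    · have h3 : 0 < (p : ℤ) ^ 2 * (p - 1) * m :=
        mul_pos (mul_pos (by positivity) (by linarith)) hmpos
      have h4 : 0 ≤ p * (p - 1) * b1 :=
        mul_nonneg (mul_nonneg (by linarith) (by linarith)) hb1pos.le
      have h5 : 0 ≤ (p - k - 1) * ((p : ℤ) ^ 2 * e0 - p * (p - 1) * b1) :=
        mul_nonneg (by linarith) (by linarith)
      have h6 : 0 ≤ (p - k - 1) * (p * b1) :=
        mul_nonneg (by linarith) (mul_nonneg (by linarith) hb1pos.le)
      linarith
  have hη : σ1 x2 = x2 + (x1 ^ p - σ1 x1 ^ p + 1) / p + (γ + δ') := by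
    rw [hσ1x2, hγ]
    ring
  have hrem : ValGE v2 1 (γ + δ') := hγv.add hv2 hδ'
  have hiter : ∀ j : ℕ, ∃ r, ValGE v2 1 r ∧
      (σ1 ^ j) x2 = x2 + (x1 ^ p - (σ1 ^ j) x1 ^ p + j) / p + r := by
    intro j
    induction j with
    | zero => exact ⟨0, Or.inl rfl, by simp⟩
    | succ j ih =>
      obtain ⟨r, hr, hj⟩ := ih
      refine ⟨γ + δ' + σ1 r, hrem.add hv2 (hv2.valGE_one_map hram' σ1 hr), ?_⟩
      rw [pow_succ', AlgEquiv.mul_apply, AlgEquiv.mul_apply, hj]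
      simp only [map_add, map_sub, map_div₀, map_pow, map_natCast]
      rw [hη]
      push_cast
      ring
  obtain ⟨δ, hδv, hδ⟩ := hiter p
  rw [hfix, sub_self, zero_add, div_self hpK] at hδ
  refine ⟨δ, hδ, ?_⟩
  rw [hva2, neg_neg]
  change ValGE v2 _ δ
  have hd : ValGE v2 0 (1 + δ) := (ValGE.one hv2).add hv2 (hδv.mono zero_le_one)
  have hroot : δ = δ ^ p + p * mixedTerms p 1 δ + p * mixedTerms p x2 (1 + δ) := by
    have h := congrArg (σ1 ^ p) hx2
    simp only [map_sub, map_add, map_div₀, map_pow, map_natCast, AlgEquiv.commutes, hfix] at h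
    rw [← hx2, hδ, add_assoc, add_pow_eq_mixedTerms hp, add_pow_eq_mixedTerms hp 1 δ,
      one_pow] at h
    linear_combination -h
  have hpv : ValGE v2 ((p : ℤ) ^ 2 * e0) (p : K2) := Or.inr hvp.ge
  have hmain : ValGE v2 ((p : ℤ) ^ 2 * e0 - p * (p - 1) * (p * m + b1))
      (p * mixedTerms p x2 (1 + δ)) := by
    refine (hpv.mul hv2 (hv2.valGE_mixedTerms (t := -(p * (p - 1) * (p * m + b1)))
      hx2v hd fun k hk1 hk2 => ?_)).mono (by linarith)
    have h1 : 0 ≤ (p - 1 - k) * (p * (p * m + b1)) :=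
      mul_nonneg (by linarith) (by positivity)
    linarith
  refine hv2.valGE_of_eq_pow_add hp (hpv.mono ?_) hδv hmain hroot
  exact one_le_mul_of_one_le_of_one_le (one_le_pow₀ (by linarith)) he0pos
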